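/- The Galois group over ℚ of the polynomial p(X) = X⁵ + 1440 X⁴ + 782464 X³ + 200810496 X² + 24403705856 X + 1126904627200 (i.e. the Galois group of its splitting field over ℚ) is isomorphic to the symmetric group S₅ on five letters. -/

import Mathlib

/-!
The Galois group acts faithfully on the five roots of the quintic, so it is enough that its image
in the symmetric group of the roots is everything. A subgroup of `S₅` whose order is divisible by
`5` and which contains a transposition is all of `S₅`.

Divisibility by `5` follows from irreducibility (`irreducible_pQuintic`), which holds already
modulo `19`. All five roots are real, so complex conjugation is no help, and the transposition comes
from a Frobenius element at `5` instead (`exists_frobenius`, `exists_ncard_fixed_eq_three`): modulo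
`5` the quintic is the separable product `X (X - 2) (X - 4) (X ^ 2 + X + 2)` with irreducible
quadratic factor. Let `Q` be a prime of the splitting field above `5`. Reduction modulo `Q` is a
bijection from the roots to the roots of the reduced quintic and turns the action of the Frobenius
element into `x ↦ x ^ 5`, which fixes exactly `0`, `2` and `4`. The Frobenius element thus fixes
three roots and swaps the other two.
-/

open Polynomial

/-- The quintic `X⁵ + 1440X⁴ + 782464X³ + 200810496X² + 24403705856X
+ 1126904627200` over `ℚ`. -/
noncomputable def pQuintic : ℚ[X] :=
  X ^ 5 + 1440 * X ^ 4 + 782464 * X ^ 3 + 200810496 * X ^ 2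
    + 24403705856 * X + 1126904627200

open NumberField

/-- A Frobenius element at a rational prime `p`: an automorphism inducing `x ↦ x ^ p` on the residue
field of some prime `Q` above `p`. -/
theorem exists_frobenius (K : Type*) [Field K] [NumberField K] [IsGalois ℚ K]
    (p : ℕ) [hp : Fact p.Prime] :
    ∃ Q : Ideal (𝓞 K), Q.IsMaximal ∧ (p : 𝓞 K) ∈ Q ∧
      ∃ σ : Gal(K/ℚ), ∀ x : 𝓞 K, σ • x - x ^ p ∈ Q := by
  have hpmax : (Ideal.span {(p : ℤ)}).IsMaximal :=
    Int.ideal_span_isMaximal_of_prime p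
  obtain ⟨Q, hQ, hQp⟩ := Ideal.exists_maximal_ideal_liesOver_of_isIntegral
    (S := 𝓞 K) (Ideal.span {(p : ℤ)})
  have hunder : Q.under ℤ = Ideal.span {(p : ℤ)} := hQp.over.symm
  refine ⟨Q, hQ, ?_, ?_⟩
  · have : (p : ℤ) ∈ Q.under ℤ := hunder ▸ Ideal.mem_span_singleton_self _
    simpa [Ideal.mem_comap, Ideal.under_def] using this
  · obtain ⟨σ, hσ⟩ := IsArithFrobAt.exists_of_isInvariant ℤ Gal(K/ℚ) Q
    refine ⟨σ, fun x => ?_⟩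
    have h := hσ x
    rwa [hunder, Nat.card_congr (Int.quotientSpanNatEquivZMod p).toEquiv, Nat.card_zmod] at h

/-- The values of `pQuintic`, as a function on an arbitrary commutative ring. -/
def quinticFun {R : Type*} [CommRing R] (x : R) : R :=
  x ^ 5 + 1440 * x ^ 4 + 782464 * x ^ 3 + 200810496 * x ^ 2
    + 24403705856 * x + 1126904627200

theorem map_quinticFun {R S : Type*} [CommRing R] [CommRing S] (φ : R →+* S) (x : R) :
    φ (quinticFun x) = quinticFun (φ x) := by
  simp only [quinticFun, map_add, map_mul, map_pow, map_ofNat]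

theorem eval_map_pQuintic {K : Type*} [Field K] [Algebra ℚ K] (x : K) :
    (pQuintic.map (algebraMap ℚ K)).eval x = quinticFun x := by
  simp [pQuintic, quinticFun]

theorem aeval_pQuintic {K : Type*} [Field K] [Algebra ℚ K] (x : K) :
    aeval x pQuintic = quinticFun x := by
  rw [← eval_map_algebraMap, eval_map_pQuintic]

theorem natDegree_pQuintic : pQuintic.natDegree = 5 := by
  unfold pQuintic
  compute_degree!

theorem monic_pQuintic : pQuintic.Monic := by
  unfold pQuintic
  monicity!

/-- Modulo `5` the quintic is `X (X - 2) (X - 4) (X ^ 2 + X + 2)`. -/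
theorem quinticFun_char_five {k : Type*} [CommRing k] (h5 : (5 : k) = 0) (x : k) :
    quinticFun x = x * (x - 2) * (x - 4) * (x ^ 2 + x + 2) := by
  unfold quinticFun
  linear_combination (289 * x ^ 4 + 156492 * x ^ 3 + 40162100 * x ^ 2 + 4880741168 * x
    + 225380925440) * h5

/-- The derivative of the quintic is `2 X ^ 2 + 2 X + 1` modulo `5`; it vanishes at no root. -/
theorem derivative_ne_zero_char_five {k : Type*} [Field k] (h5 : (5 : k) = 0) (x : k)
    (hx : quinticFun x = 0) : 2 * x ^ 2 + 2 * x + 1 ≠ 0 := by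
  intro hd
  rw [quinticFun_char_five h5] at hx
  have h1 : (1 : k) ≠ 0 := one_ne_zero
  simp only [mul_eq_zero, sub_eq_zero] at hx
  rcases hx with ((rfl | rfl) | rfl) | hx
  · exact h1 (by linear_combination hd)
  · exact h1 (by linear_combination 2 * hd - 5 * h5)
  · exact h1 (by linear_combination hd - 8 * h5)
  · exact h1 (by linear_combination -2 * hd + 4 * hx - h5)

theorem pow_five_eq_iff_char_five {k : Type*} [Field k] (h5 : (5 : k) = 0) (x : k)
    (hx : quinticFun x = 0) : x ^ 5 = x ↔ x ∈ ({0, 2, 4} : Set k) := by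
  rw [quinticFun_char_five h5] at hx
  simp only [mul_eq_zero, sub_eq_zero] at hx
  simp only [Set.mem_insert_iff, Set.mem_singleton_iff]
  constructor
  · intro h
    rcases hx with ((h | h) | h) | hq
    · exact .inl h
    · exact .inr (.inl h)
    · exact .inr (.inr h)
    · exfalso
      have h2 : x = 2 := by
        linear_combination 2 * h - 2 * (x ^ 3 - x ^ 2 - x + 3) * hq + (x + 2) * h5
      subst h2
      exact one_ne_zero (α := k) (by linear_combination 2 * hq - 3 * h5)
  · rintro (rfl | rfl | rfl)
    · simp
    · linear_combination 6 * h5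
    · linear_combination 204 * h5

/-- The reduction of the quintic modulo `19`. -/
noncomputable def quinticMod19 : (ZMod 19)[X] :=
  X ^ 5 + 15 * X ^ 4 + 6 * X ^ 3 + 9 * X ^ 2 + 7 * X + 12

theorem no_root_mod19 :
    ∀ a : ZMod 19, a ^ 5 + 15 * a ^ 4 + 6 * a ^ 3 + 9 * a ^ 2 + 7 * a + 12 ≠ 0 := by
  decide

set_option maxRecDepth 100000 in
/-- Dividing the quintic by `X ^ 2 + a X + b` gives the cubic with coefficients `c`, `d`, `e`; the
two remaining conditions say that the remainder vanishes. -/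
theorem no_quadratic_factor_mod19 : ∀ a b : ZMod 19,
    let c := 15 - a
    let d := 6 - b - a * c
    let e := 9 - b * c - a * d
    ¬(b * d + a * e = 7 ∧ b * e = 12) := by
  decide

theorem irreducible_quinticMod19 : Irreducible quinticMod19 := by
  have : Fact (Nat.Prime 19) := ⟨by norm_num⟩
  have hmon : quinticMod19.Monic := by unfold quinticMod19; monicity!
  have hdeg : quinticMod19.natDegree = 5 := by unfold quinticMod19; compute_degree!
  have hne : quinticMod19 ≠ 1 := fun h => by simp [h] at hdeg
  rw [hmon.irreducible_iff_lt_natDegree_lt hne, hdeg]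
  intro q hq hqdeg hdvd
  have hcases : q.natDegree = 1 ∨ q.natDegree = 2 := by
    rw [Finset.mem_Ioc] at hqdeg; omega
  rcases hcases with h1 | h2
  · rw [hq.eq_X_add_C h1, ← sub_neg_eq_add, ← C_neg, dvd_iff_isRoot] at hdvd
    refine no_root_mod19 (-q.coeff 0) (Eq.trans ?_ hdvd)
    simp [quinticMod19]
  · obtain ⟨g, hg⟩ := hdvd
    have hgmon : g.Monic := hq.of_mul_monic_left (hg ▸ hmon)
    have hgdeg : g.natDegree = 3 := by
      have := hq.natDegree_mul hgmon
      rw [← hg, hdeg, h2] at this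
      omega
    have hq2 : q.coeff 2 = 1 := by rw [← h2]; exact hq
    have hg3 : g.coeff 3 = 1 := by rw [← hgdeg]; exact hgmon
    have hq0 (n : ℕ) (hn : 2 < n) : q.coeff n = 0 := coeff_eq_zero_of_natDegree_lt (by omega)
    have hg0 (n : ℕ) (hn : 3 < n) : g.coeff n = 0 := coeff_eq_zero_of_natDegree_lt (by omega)
    have e4 := congrArg (coeff · 4) hg
    have e3 := congrArg (coeff · 3) hg
    have e2 := congrArg (coeff · 2) hg
    have e1 := congrArg (coeff · 1) hg
    have e0 := congrArg (coeff · 0) hg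
    simp [coeff_mul, Finset.Nat.antidiagonal_succ, quinticMod19, hq2, hg3, hq0, hg0, coeff_X,
      coeff_ofNat_mul, coeff_X_pow, coeff_ofNat_zero, coeff_ofNat_succ] at e4 e3 e2 e1 e0
    have hc : g.coeff 2 = 15 - q.coeff 1 := by linear_combination -e4
    have hd : g.coeff 1 = 6 - q.coeff 0 - q.coeff 1 * (15 - q.coeff 1) := by
      rw [← hc]; linear_combination -e3
    have he : g.coeff 0 = 9 - q.coeff 0 * g.coeff 2 - q.coeff 1 * g.coeff 1 := by
      linear_combination -e2
    rw [hd, hc] at he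
    refine no_quadratic_factor_mod19 (q.coeff 1) (q.coeff 0) ⟨?_, ?_⟩
    · rw [← he, ← hd]; linear_combination -e1
    · rw [← he]; linear_combination -e0

theorem irreducible_pQuintic : Irreducible pQuintic := by
  have : Fact (Nat.Prime 19) := ⟨by norm_num⟩
  let P : ℤ[X] := X ^ 5 + 1440 * X ^ 4 + 782464 * X ^ 3 + 200810496 * X ^ 2
    + 24403705856 * X + 1126904627200
  have hP : P.Monic := by unfold P; monicity!
  have hQ : P.map (Int.castRingHom ℚ) = pQuintic := by
    simp [P, pQuintic]
  have h19 : P.map (Int.castRingHom (ZMod 19)) = quinticMod19 := by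
    have h : (19 : (ZMod 19)[X]) = 0 := by
      exact_mod_cast CharP.cast_eq_zero (ZMod 19)[X] 19
    simp only [P, quinticMod19, Polynomial.map_add, Polynomial.map_mul, Polynomial.map_pow, map_X,
      Polynomial.map_ofNat]
    linear_combination (75 * X ^ 4 + 41182 * X ^ 3 + 10568973 * X ^ 2 + 1284405571 * X
      + 59310769852) * h
  rw [← hQ]
  refine (IsPrimitive.Int.irreducible_iff_irreducible_map_cast hP.isPrimitive).mp ?_
  refine hP.irreducible_of_irreducible_map (Int.castRingHom (ZMod 19)) _ ?_
  rw [h19]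
  exact irreducible_quinticMod19

/-- A Frobenius element at `5` fixes exactly three roots, those congruent to `0`, `2` and `4`. -/
theorem exists_ncard_fixed_eq_three {K : Type*} [Field K] [CharZero K] [inst : Algebra ℚ K]
    [IsSplittingField ℚ K pQuintic] :
    ∃ σ : Gal(K/ℚ), {x : pQuintic.rootSet K | σ x = x}.ncard = 3 := by
  -- `NumberField` refers to the canonical `ℚ`-algebra structure of a field of characteristic zero.
  obtain rfl : inst = DivisionRing.toRatAlgebra := Subsingleton.elim _ _
  have hK : (pQuintic.map (algebraMap ℚ K)).Splits := IsSplittingField.splits K pQuintic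
  have : FiniteDimensional ℚ K := IsSplittingField.finiteDimensional K pQuintic
  have : IsGalois ℚ K := IsGalois.of_separable_splitting_field irreducible_pQuintic.separable
  have : NumberField K := { }
  have : Fact (Nat.Prime 5) := ⟨by norm_num⟩
  obtain ⟨Q, hQ, h5Q, σ, hσ⟩ := exists_frobenius K 5
  let _ := Ideal.Quotient.field Q
  let π : 𝓞 K →+* 𝓞 K ⧸ Q := Ideal.Quotient.mk Q
  have h5 : (5 : 𝓞 K ⧸ Q) = 0 := by
    have := Ideal.Quotient.eq_zero_iff_mem.mpr h5Q
    rwa [map_natCast] at this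
  have hπσ (x : 𝓞 K) : π (σ • x) = π x ^ 5 := by
    rw [← map_pow]; exact Ideal.Quotient.eq.mpr (hσ x)
  have hroot (x : K) : x ∈ pQuintic.rootSet K ↔ quinticFun x = 0 := by
    rw [mem_rootSet, aeval_pQuintic, and_iff_right monic_pQuintic.ne_zero]
  have hintegral (x : K) (hx : quinticFun x = 0) : ∃ y : 𝓞 K, (y : K) = x := by
    refine ⟨⟨x, X ^ 5 + 1440 * X ^ 4 + 782464 * X ^ 3 + 200810496 * X ^ 2
      + 24403705856 * X + 1126904627200, by monicity!, ?_⟩, rfl⟩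
    simpa [quinticFun, eval₂_add, eval₂_mul] using hx
  have hlift (x : pQuintic.rootSet K) : ∃ y : 𝓞 K, (y : K) = x := hintegral x ((hroot x).mp x.2)
  choose l hl using hlift
  have hl0 (x : pQuintic.rootSet K) : quinticFun (l x) = 0 := by
    apply RingOfIntegers.coe_injective
    have := (hroot x).mp x.2
    rw [← hl, ← map_quinticFun (algebraMap (𝓞 K) K)] at this
    simpa using this
  have hπl (x : pQuintic.rootSet K) : quinticFun (π (l x)) = 0 := by
    rw [← map_quinticFun, hl0, map_zero]
  -- Distinct roots `a`, `b` annihilate the difference quotient of the quintic, which reduces to its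
  -- derivative once `a ≡ b`.
  have hinj (a b : 𝓞 K) (ha : quinticFun a = 0) (hb : quinticFun b = 0) (hab : π a = π b) :
      a = b := by
    by_contra hne
    have hG : a ^ 4 + a ^ 3 * b + a ^ 2 * b ^ 2 + a * b ^ 3 + b ^ 4
        + 1440 * (a ^ 3 + a ^ 2 * b + a * b ^ 2 + b ^ 3) + 782464 * (a ^ 2 + a * b + b ^ 2)
        + 200810496 * (a + b) + 24403705856 = 0 := by
      apply mul_left_cancel₀ (sub_ne_zero.mpr hne)
      unfold quinticFun at ha hb
      linear_combination ha - hb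
    have hG' := congrArg π hG
    simp only [map_add, map_mul, map_pow, map_ofNat, map_zero, hab] at hG'
    refine derivative_ne_zero_char_five h5 (π b) (by rw [← map_quinticFun, hb, map_zero]) ?_
    linear_combination hG' - (π b ^ 4 + 1152 * π b ^ 3 + 469478 * π b ^ 2 + 80324198 * π b
      + 4880741171) * h5
  have hfix (x : pQuintic.rootSet K) : σ x = x ↔ π (l x) ∈ ({0, 2, 4} : Set (𝓞 K ⧸ Q)) := by
    rw [← pow_five_eq_iff_char_five h5 _ (hπl x), ← hπσ]
    have hcoe : ((σ • l x : 𝓞 K) : K) = σ x := by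
      rw [← hl x]; rfl
    constructor
    · intro h
      congr 1
      apply RingOfIntegers.coe_injective
      exact hcoe.trans (h.trans (hl x).symm)
    · intro h
      have := hinj _ _ ?_ (hl0 x) h
      · rw [← hcoe, this, hl]
      · have h0 := map_quinticFun (MulSemiringAction.toRingHom Gal(K/ℚ) (𝓞 K) σ) (l x)
        rw [hl0, map_zero] at h0
        exact h0.symm
  -- Evaluating `∏ (X - r)` at `c` shows that a root of the quintic modulo `Q` lifts to a root.
  have hsurj (c : 𝓞 K) (hc : quinticFun (π c) = 0) : ∃ x, π (l x) = π c := by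
    have hprod := hK.eq_prod_roots_of_monic (monic_pQuintic.map _)
    have hev := congrArg (eval (c : K)) hprod
    rw [eval_map_pQuintic, eval_multiset_prod, Multiset.map_map] at hev
    let m : Multiset (pQuintic.rootSet K) :=
      (pQuintic.map (algebraMap ℚ K)).roots.pmap (fun x hx => ⟨x, hx⟩)
        (fun x hx => by
          rw [hroot, ← eval_map_pQuintic]; exact isRoot_of_mem_roots hx)
    have hm : m.map Subtype.val = (pQuintic.map (algebraMap ℚ K)).roots := by
      rw [Multiset.map_pmap, Multiset.pmap_eq_map, Multiset.map_id']
    have hA : quinticFun c = (m.map fun x => c - l x).prod := by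
      apply RingOfIntegers.coe_injective
      rw [map_quinticFun, hev, map_multiset_prod, ← hm, Multiset.map_map, Multiset.map_map]
      congr 1
      apply Multiset.map_congr rfl
      intro x _
      simp [hl]
    rw [← map_quinticFun, hA, map_multiset_prod, Multiset.map_map, Multiset.prod_eq_zero_iff] at hc
    obtain ⟨x, -, hx⟩ := Multiset.mem_map.mp hc
    refine ⟨x, (sub_eq_zero.mp ?_).symm⟩
    rwa [Function.comp_apply, map_sub] at hx
  refine ⟨σ, ?_⟩
  have hset : {x : pQuintic.rootSet K | σ x = x} = (fun x => π (l x)) ⁻¹' {0, 2, 4} := by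
    ext x; exact hfix x
  have h1 : (1 : 𝓞 K ⧸ Q) ≠ 0 := one_ne_zero
  rw [hset, Set.ncard_preimage_of_injective_subset_range]
  · rw [Set.ncard_eq_three]
    refine ⟨0, 2, 4, ?_, ?_, ?_, rfl⟩
    · exact fun h => h1 (by linear_combination 2 * h + h5)
    · exact fun h => h1 (by linear_combination h + h5)
    · exact fun h => h1 (by linear_combination 2 * h + h5)
  · intro x y hxy
    apply Subtype.ext
    rw [← hl, ← hl, hinj _ _ (hl0 x) (hl0 y) hxy]
  · rintro c (rfl | rfl | rfl)
    · simpa using hsurj 0 (by rw [quinticFun_char_five h5]; simp)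
    · simpa only [map_ofNat, Set.mem_range] using
        hsurj 2 (by rw [quinticFun_char_five h5, map_ofNat]; simp)
    · simpa only [map_ofNat, Set.mem_range] using
        hsurj 4 (by rw [quinticFun_char_five h5, map_ofNat]; simp)

/-- An irreducible polynomial of prime degree has full Galois group as soon as some automorphism
moves exactly two roots. -/
theorem gal_equiv_perm_of_two_moved {F : Type*} [Field F] [CharZero F] {p : F[X]}
    (hirr : Irreducible p) (hprime : p.natDegree.Prime) {n : ℕ} (hn : p.natDegree = n + 2)
    {σ : p.Gal} (hσ : {x : p.rootSet p.SplittingField | σ x = x}.ncard = n) :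
    Nonempty (p.Gal ≃* Equiv.Perm (Fin p.natDegree)) := by
  classical
  have hcard : Fintype.card (p.rootSet p.SplittingField) = p.natDegree :=
    card_rootSet_eq_natDegree hirr.separable (SplittingField.splits _)
  let ρ : p.Gal →* Equiv.Perm (p.rootSet p.SplittingField) := MulAction.toPermHom _ _
  have hρ (τ : p.Gal) (x : p.rootSet p.SplittingField) :
      ((ρ τ x : p.rootSet p.SplittingField) : p.SplittingField) = τ x := rfl
  have hinj : Function.Injective ρ := by
    intro τ₁ τ₂ h
    ext x hx
    rw [← hρ τ₁ ⟨x, hx⟩, h, hρ]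
  have htop : ρ.range = ⊤ := by
    apply Equiv.Perm.subgroup_eq_top_of_swap_mem (τ := ρ σ)
    · rwa [hcard]
    · rw [hcard]
      simpa only [Fintype.card_eq_nat_card,
        Nat.card_congr (MonoidHom.ofInjective hinj).toEquiv.symm]
        using Gal.prime_degree_dvd_card hirr hprime
    · exact ⟨σ, rfl⟩
    · rw [← Equiv.Perm.card_support_eq_two]
      have hfixed : (ρ σ).supportᶜ.card = n := by
        rw [← hσ, ← Set.ncard_coe_finset]
        congr 1
        ext x
        simp [Subtype.ext_iff, hρ]
      have := Finset.card_add_card_compl (ρ σ).support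
      omega
  exact ⟨(MulEquiv.ofBijective ρ ⟨hinj, MonoidHom.range_eq_top.mp htop⟩).trans
    (Fintype.equivFinOfCardEq hcard).permCongrHom⟩

/-- the Galois group of the splitting field of `pQuintic` over `ℚ`
is isomorphic to the symmetric group `S₅`. -/
theorem stmt4 : Nonempty (pQuintic.Gal ≃* Equiv.Perm (Fin 5)) := by
  -- The instances are explicit because instance search would find the canonical `ℚ`-algebra
  -- structure, which is not syntactically the one used by `Polynomial.Gal`.
  obtain ⟨σ, hσ⟩ := @exists_ncard_fixed_eq_three pQuintic.SplittingField _ inferInstance _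
    (IsSplittingField.splittingField pQuintic)
  have h := gal_equiv_perm_of_two_moved irreducible_pQuintic
    (by rw [natDegree_pQuintic]; norm_num) natDegree_pQuintic hσ
  rwa [natDegree_pQuintic] at h
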